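/- There exist at least 10 pairwise inequivalent s-extremal singly even self-dual [62,31,12] codes; that is, there exist at least 10 pairwise inequivalent singly even self-dual codes of length 62 with minimum weight 12 whose shadows have minimum weight 11. -/

import Mathlib

open Finset

/-- Hamming weight of a binary vector. -/
def wt {n : ℕ} (x : Fin n → ZMod 2) : ℕ := hammingNorm x

/-- The dual of a set of binary vectors with respect to the standard inner product. -/
def dualSet {n : ℕ} (C : Set (Fin n → ZMod 2)) : Set (Fin n → ZMod 2) :=
  {x | ∀ y ∈ C, ∑ i, x i * y i = 0}

/-- A binary linear code is self-dual if it equals its dual code. -/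
def IsSelfDual {n : ℕ} (C : Submodule (ZMod 2) (Fin n → ZMod 2)) : Prop :=
  (C : Set (Fin n → ZMod 2)) = dualSet (C : Set (Fin n → ZMod 2))

/-- A self-dual code is singly even if some codeword has weight not divisible by 4. -/
def IsSinglyEvenSelfDual {n : ℕ} (C : Submodule (ZMod 2) (Fin n → ZMod 2)) : Prop :=
  IsSelfDual C ∧ ∃ x ∈ C, ¬ (4 ∣ wt x)

/-- The doubly even subcode `C₀` of `C` (as a set): codewords of weight ≡ 0 (mod 4). -/
def evenSub {n : ℕ} (C : Submodule (ZMod 2) (Fin n → ZMod 2)) : Set (Fin n → ZMod 2) :=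
  {x | x ∈ C ∧ 4 ∣ wt x}

/-- The shadow `S = C₀^⊥ \ C` of a singly even self-dual code. -/
def shadow {n : ℕ} (C : Submodule (ZMod 2) (Fin n → ZMod 2)) : Set (Fin n → ZMod 2) :=
  dualSet (evenSub C) \ (C : Set (Fin n → ZMod 2))

/-- The minimum (nonzero) weight of a set of vectors. -/
noncomputable def minWtSet {n : ℕ} (S : Set (Fin n → ZMod 2)) : ℕ :=
  sInf {w | ∃ x ∈ S, x ≠ 0 ∧ wt x = w}

/-- The minimum weight of a code. -/
noncomputable def minWt {n : ℕ} (C : Submodule (ZMod 2) (Fin n → ZMod 2)) : ℕ :=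
  minWtSet (C : Set (Fin n → ZMod 2))

/-- A singly even self-dual code of length `n` is s-extremal if
`d(S) = n/2 + 4 - 2 d(C)`. -/
def IsSExtremal {n : ℕ} (C : Submodule (ZMod 2) (Fin n → ZMod 2)) : Prop :=
  IsSinglyEvenSelfDual C ∧
    (minWtSet (shadow C) : ℤ) = ((n / 2 : ℕ) : ℤ) + 4 - 2 * (minWt C : ℤ)

/-- Two codes are equivalent if one is obtained from the other by permuting coordinates. -/
def CodeEquiv {n : ℕ} (C D : Submodule (ZMod 2) (Fin n → ZMod 2)) : Prop :=
  ∃ σ : Equiv.Perm (Fin n),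
    Submodule.map (LinearMap.funLeft (ZMod 2) (ZMod 2) σ) C = D

/-- The neighbor `C₀ ∪ (t + C₀)` of `C` obtained from a shadow vector `t`:
the span of the doubly even subcode together with `t`. -/
def neighborCode {n : ℕ} (C : Submodule (ZMod 2) (Fin n → ZMod 2))
    (t : Fin n → ZMod 2) : Submodule (ZMod 2) (Fin n → ZMod 2) :=
  Submodule.span (ZMod 2) (evenSub C ∪ {t})

/-! If `A * Aᵀ = 1`, then `[I | A]` and `[Aᵀ | I]` generate the same self-dual code `C`. The map
`c ↦ wt c / 2` modulo 2 is a linear functional on `C` with kernel the doubly even subcode, so the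
shadow is the coset of `C` given by any vector `s` that represents this functional, and `s` can be
chosen to vanish on either half of the coordinates. A word of weight at most `2 * k + 1` in `C` or
in its shadow has weight at most `k` on one of the two halves, hence occurs among the translated
combinations of at most `k` rows of one of the two generator matrices. For `k = 5` and order 31
these are about 400,000 words. They are examined simultaneously: each coordinate is stored as one
large number with a digit for every word, and arithmetic on these numbers compares weights and
counts words. The ten codes belong to bordered four-circulant matrices and are distinguished by
the numbers of words of weight 11 of the shadow that are nonzero at two given coordinates. -/

section Packing

variable {α β : Type*}

/-- The values of `f` along `L`, stored as the digits of one number in base `2 ^ w`. -/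
def pack (w : ℕ) (L : List α) (f : α → ℕ) : ℕ :=
  Nat.ofDigits (2 ^ w) (L.map f)

theorem pack_cons (w : ℕ) (a : α) (L : List α) (f : α → ℕ) :
    pack w (a :: L) f = 2 ^ w * pack w L f + f a := by
  simp only [pack, List.map_cons, Nat.ofDigits_cons, add_comm]

theorem pack_map (w : ℕ) (g : α → β) (L : List α) (f : β → ℕ) :
    pack w (L.map g) f = pack w L fun a => f (g a) := by
  simp only [pack, List.map_map, Function.comp_def]

theorem pack_append (w : ℕ) (L M : List α) (f : α → ℕ) :
    pack w (L ++ M) f = pack w L f + pack w M f <<< (w * L.length) := by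
  rw [pack, List.map_append, Nat.ofDigits_append, List.length_map, Nat.shiftLeft_eq, pow_mul,
    mul_comm, pack, pack]

theorem pack_congr {w : ℕ} {L : List α} {f g : α → ℕ} (h : ∀ a ∈ L, f a = g a) :
    pack w L f = pack w L g :=
  congrArg (Nat.ofDigits (2 ^ w)) (List.map_congr_left h)

theorem pack_add (w : ℕ) (L : List α) (f g : α → ℕ) :
    pack w L (fun a => f a + g a) = pack w L f + pack w L g := by
  induction L with
  | nil => rfl
  | cons a L ih => rw [pack_cons, ih, pack_cons, pack_cons]; ring

theorem pack_const_mul (w c : ℕ) (L : List α) (f : α → ℕ) :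
    pack w L (fun a => c * f a) = c * pack w L f := by
  induction L with
  | nil => rfl
  | cons a L ih => rw [pack_cons, ih, pack_cons]; ring

theorem pack_sum {ι : Type*} (w : ℕ) (L : List α) (s : Finset ι) (f : ι → α → ℕ) :
    pack w L (fun a => ∑ i ∈ s, f i a) = ∑ i ∈ s, pack w L (f i) := by
  induction L with
  | nil => exact (sum_const_zero).symm
  | cons a L ih => simp only [pack_cons, ih, sum_add_distrib, mul_sum]

theorem pack_sub {w : ℕ} {L : List α} {f g : α → ℕ} (h : ∀ a ∈ L, g a ≤ f a) :
    pack w L (fun a => f a - g a) = pack w L f - pack w L g := by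
  rw [← pack_congr fun a ha => Nat.sub_add_cancel (h a ha), pack_add, Nat.add_sub_cancel]

theorem two_pow_mul_add_land {w a b : ℕ} (ha : a < 2 ^ w) (hb : b < 2 ^ w) (x y : ℕ) :
    (2 ^ w * x + a) &&& (2 ^ w * y + b) = 2 ^ w * (x &&& y) + (a &&& b) := by
  refine Nat.eq_of_testBit_eq fun i => ?_
  rw [Nat.testBit_and, Nat.testBit_two_pow_mul_add _ ha, Nat.testBit_two_pow_mul_add _ hb,
    Nat.testBit_two_pow_mul_add _ (Nat.and_lt_two_pow a hb)]
  split <;> simp only [Nat.testBit_and]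

theorem pack_land {w : ℕ} {L : List α} {f g : α → ℕ} (hf : ∀ a ∈ L, f a < 2 ^ w)
    (hg : ∀ a ∈ L, g a < 2 ^ w) :
    pack w L (fun a => f a &&& g a) = pack w L f &&& pack w L g := by
  induction L with
  | nil => simp only [pack, List.map_nil, Nat.ofDigits_nil, Nat.and_self]
  | cons a L ih =>
    rw [List.forall_mem_cons] at hf hg
    rw [pack_cons, pack_cons, pack_cons, two_pow_mul_add_land hf.1 hg.1, ih hf.2 hg.2]

theorem pack_inj {w : ℕ} {L : List α} {f g : α → ℕ} (hw : w ≠ 0) (hf : ∀ a ∈ L, f a < 2 ^ w)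
    (hg : ∀ a ∈ L, g a < 2 ^ w) : pack w L f = pack w L g ↔ ∀ a ∈ L, f a = g a := by
  refine ⟨fun h => ?_, pack_congr⟩
  rw [← List.map_inj_left]
  exact Nat.ofDigits_inj_of_len_eq (Nat.one_lt_two_pow hw) (by simp only [List.length_map])
    (List.forall_mem_map.2 hf) (List.forall_mem_map.2 hg) h

-- Casting out `2 ^ w - 1`.
theorem pack_mod (w : ℕ) (L : List α) (f : α → ℕ) :
    pack w L f % (2 ^ w - 1) = (L.map f).sum % (2 ^ w - 1) := by
  have h : 2 ^ w ≡ 1 [MOD 2 ^ w - 1] :=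
    ((Nat.modEq_iff_dvd' Nat.one_le_two_pow).2 dvd_rfl).symm
  rw [← Nat.ofDigits_one]
  exact Nat.ofDigits_modEq' _ _ _ h _

/-- The indicator of `p` along `L`, in digits of `w` bits, so that bitwise conjunction intersects
and the residue modulo `2 ^ w - 1` counts. -/
def mask (w : ℕ) (L : List α) (p : α → Bool) : ℕ :=
  pack w L fun a => (p a).toNat

theorem mask_map (w : ℕ) (g : α → β) (L : List α) (p : β → Bool) :
    mask w (L.map g) p = mask w L fun a => p (g a) :=
  pack_map w g L _

theorem toNat_lt_two_pow {w : ℕ} (hw : w ≠ 0) (b : Bool) : b.toNat < 2 ^ w :=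
  b.toNat_le.trans_lt (Nat.one_lt_two_pow hw)

theorem mask_land {w : ℕ} (hw : w ≠ 0) (L : List α) (p q : α → Bool) :
    mask w L p &&& mask w L q = mask w L fun a => p a && q a := by
  have toNat_land (b c : Bool) : b.toNat &&& c.toNat = (b && c).toNat := by
    cases b <;> cases c <;> rfl
  rw [mask, mask, ← pack_land (fun a _ => toNat_lt_two_pow hw (p a)) fun a _ =>
    toNat_lt_two_pow hw (q a)]
  simp only [toNat_land, mask]

theorem mask_inj {w : ℕ} (hw : w ≠ 0) {L : List α} {p q : α → Bool} :
    mask w L p = mask w L q ↔ ∀ a ∈ L, p a = q a := by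
  have toNat_inj (b c : Bool) : b.toNat = c.toNat ↔ b = c := by
    cases b <;> cases c <;> decide
  rw [mask, mask, pack_inj hw (fun a _ => toNat_lt_two_pow hw (p a)) fun a _ =>
    toNat_lt_two_pow hw (q a)]
  simp only [toNat_inj]

theorem sum_map_toNat (L : List α) (p : α → Bool) :
    (L.map fun a => (p a).toNat).sum = L.countP p := by
  induction L with
  | nil => rfl
  | cons a L ih => cases h : p a <;> simp [h, ih, add_comm]

theorem mask_mod (w : ℕ) (L : List α) (p : α → Bool) :
    mask w L p % (2 ^ w - 1) = L.countP p % (2 ^ w - 1) := by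
  rw [mask, pack_mod, sum_map_toNat]

end Packing

section LightWords

variable {n : ℕ}

theorem wt_eq_sum (x : Fin n → ZMod 2) : wt x = ∑ c, (decide (x c ≠ 0)).toNat := by
  simp only [wt, hammingNorm, card_filter, Bool.toNat, Bool.cond_decide]

theorem wt_zero : wt (0 : Fin n → ZMod 2) = 0 :=
  hammingNorm_zero

theorem wt_eq_zero {x : Fin n → ZMod 2} : wt x = 0 ↔ x = 0 :=
  hammingNorm_eq_zero

theorem wt_le (x : Fin n → ZMod 2) : wt x ≤ n :=
  hammingNorm_le_card_fintype.trans_eq (Fintype.card_fin n)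

/-- The columns of a table of words, as masks along the table. -/
def columns (w : ℕ) (L : List (Fin n → ZMod 2)) : List ℕ :=
  List.ofFn fun c => mask w L fun x => x c ≠ 0

theorem sum_columns (w : ℕ) (L : List (Fin n → ZMod 2)) :
    (columns w L).sum = pack w L wt := by
  simp only [columns, List.sum_ofFn, mask, ← pack_sum, ← wt_eq_sum]

/-- The mask of the words `x` of weight less than `d` in a table with columns `cols` and all-ones
column `ones`, in digits of `w + 1` bits: they are the words for which the top bit of
`2 ^ w - 1 + d - wt x` is set. -/
def lightMask (w d ones : ℕ) (cols : List ℕ) : ℕ :=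
  (((2 ^ w - 1 + d) * ones - cols.sum) &&& (2 ^ w * ones)) / 2 ^ w

theorem and_two_pow_of_lt {w a : ℕ} (h : a < 2 ^ (w + 1)) :
    a &&& 2 ^ w = 2 ^ w * (decide (2 ^ w ≤ a)).toNat := by
  have testBit_eq : a.testBit w = decide (2 ^ w ≤ a) := by
    rcases lt_or_ge a (2 ^ w) with hlt | hle
    · rw [Nat.testBit_lt_two_pow hlt, decide_eq_false hlt.not_ge]
    · rw [Nat.testBit_of_two_pow_le_and_two_pow_add_one_gt hle h, decide_eq_true hle]
  rw [Nat.and_two_pow, testBit_eq, mul_comm]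

theorem lightMask_columns {w d : ℕ} (L : List (Fin n → ZMod 2)) (hn : n < 2 ^ w) (hd : d ≤ 2 ^ w) :
    lightMask w d (mask (w + 1) L fun _ => true) (columns (w + 1) L) =
      mask (w + 1) L fun x => wt x < d := by
  have wt_lt (x : Fin n → ZMod 2) : wt x < 2 ^ w := (wt_le x).trans_lt hn
  have const (c : ℕ) : c * mask (w + 1) L (fun _ => true) = pack (w + 1) L fun _ => c := by
    rw [mask, ← pack_const_mul]; simp only [Bool.toNat_true, mul_one]
  have digit (x : Fin n → ZMod 2) : (2 ^ w - 1 + d - wt x) &&& 2 ^ w =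
      2 ^ w * (decide (wt x < d)).toNat := by
    rw [and_two_pow_of_lt (by rw [pow_succ]; have := wt_lt x; omega)]
    congr 3
    rw [eq_iff_iff]
    have := wt_lt x; omega
  rw [lightMask, const, const, sum_columns, ← pack_sub, ← pack_land]
  · simp only [digit, pack_const_mul]
    exact Nat.mul_div_cancel_left _ (by positivity)
  · intro x _
    rw [pow_succ]; have := wt_lt x; omega
  · intro x _
    exact Nat.pow_lt_pow_right one_lt_two w.lt_succ_self
  · intro x _
    have := wt_lt x; omega

theorem lightMask_eq_iff {w a b : ℕ} (L : List (Fin n → ZMod 2)) (hn : n < 2 ^ w)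
    (ha : a ≤ 2 ^ w) (hb : b ≤ 2 ^ w) :
    lightMask w a (mask (w + 1) L fun _ => true) (columns (w + 1) L) =
      lightMask w b (mask (w + 1) L fun _ => true) (columns (w + 1) L) ↔
      ∀ x ∈ L, wt x < a ↔ wt x < b := by
  simp only [lightMask_columns L hn ha, lightMask_columns L hn hb, mask_inj w.succ_ne_zero,
    decide_eq_decide]

/-- With `light` the mask of a set of words, the sum over all pairs of columns of the square of
the residue modulo `2 ^ w - 1` of the number of words in the set that are nonzero in both. -/
def pairSum (w light : ℕ) (cols : List ℕ) : ℕ :=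
  (cols.map fun p => (cols.map fun q => ((light &&& p &&& q) % (2 ^ w - 1)) ^ 2).sum).sum

theorem pairSum_columns {w : ℕ} (hw : w ≠ 0) (L : List (Fin n → ZMod 2))
    (p : (Fin n → ZMod 2) → Bool) :
    pairSum w (mask w L p) (columns w L) =
      ∑ i, ∑ j, ((L.countP fun x => p x && x i ≠ 0 && x j ≠ 0) % (2 ^ w - 1)) ^ 2 := by
  simp only [pairSum, columns, List.map_ofFn, List.sum_ofFn, Function.comp_def,
    mask_land hw, mask_mod]

end LightWords

section SparseWords

open Matrix

/-- The words of length `n` and weight at most `k`. -/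
def sparse : (n k : ℕ) → List (Fin n → ZMod 2)
  | 0, _ => [0]
  | _ + 1, 0 => [0]
  | n + 1, k + 1 => (sparse n (k + 1)).map (vecCons 0) ++ (sparse n k).map (vecCons 1)

theorem eq_zero_or_eq_one (a : ZMod 2) : a = 0 ∨ a = 1 := by
  revert a; decide

theorem wt_vecCons {n : ℕ} (a : ZMod 2) (u : Fin n → ZMod 2) :
    wt (vecCons a u) = (decide (a ≠ 0)).toNat + wt u := by
  simp only [wt_eq_sum, Fin.sum_univ_succ, cons_val_zero, cons_val_succ]
  rfl

theorem mem_sparse {n k : ℕ} {u : Fin n → ZMod 2} : u ∈ sparse n k ↔ wt u ≤ k := by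
  induction n generalizing k with
  | zero => simp only [sparse, Subsingleton.elim u 0, List.mem_singleton, wt_zero, zero_le]
  | succ n ih =>
    cases k with
    | zero => simp only [sparse, List.mem_singleton, nonpos_iff_eq_zero, wt_eq_zero]
    | succ k =>
      obtain ⟨a, v, rfl⟩ : ∃ a v, u = vecCons a v := ⟨u 0, vecTail u, (cons_head_tail u).symm⟩
      have mem_succ : vecCons a v ∈ sparse (n + 1) (k + 1) ↔
          a = 0 ∧ v ∈ sparse n (k + 1) ∨ a = 1 ∧ v ∈ sparse n k := by
        simp [sparse, vecCons_inj, eq_comm, and_comm]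
      rw [mem_succ, ih, ih, wt_vecCons]
      rcases eq_zero_or_eq_one a with rfl | rfl
      · simp
      · simp [add_comm 1]

theorem nodup_sparse (n k : ℕ) : (sparse n k).Nodup := by
  induction n generalizing k with
  | zero => exact List.nodup_singleton 0
  | succ n ih =>
    cases k with
    | zero => exact List.nodup_singleton 0
    | succ k =>
      refine ((ih _).map fun _ _ h => (vecCons_inj.1 h).2).append
        ((ih _).map fun _ _ h => (vecCons_inj.1 h).2) ?_
      simp [List.disjoint_left, vecCons_inj]

end SparseWords

section Blocks

open Matrix

variable {α β : Type*}

/-- The mask of a binary functional along a table, together with the number of entries of the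
table and the complementary mask. -/
structure BitBlock where
  length : ℕ
  bits : ℕ
  compl : ℕ

namespace BitBlock

/-- The block of the concatenation of two tables. -/
def append (w : ℕ) (X Y : BitBlock) : BitBlock :=
  ⟨X.length + Y.length, X.bits + Y.bits <<< (w * X.length), X.compl + Y.compl <<< (w * X.length)⟩

/-- The block of the functional with the constant `a` added. -/
def addScalar (a : ZMod 2) (X : BitBlock) : BitBlock :=
  if a = 0 then X else ⟨X.length, X.compl, X.bits⟩

/-- The block of a functional along a table. -/
def ofList (w : ℕ) (L : List α) (φ : α → ZMod 2) : BitBlock :=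
  ⟨L.length, mask w L fun a => φ a ≠ 0, mask w L fun a => φ a = 0⟩

theorem ofList_append (w : ℕ) (L M : List α) (φ : α → ZMod 2) :
    ofList w (L ++ M) φ = (ofList w L φ).append w (ofList w M φ) := by
  simp only [ofList, append, List.length_append, mask, pack_append]

theorem ofList_map (w : ℕ) (f : α → β) (L : List α) (φ : β → ZMod 2) :
    ofList w (L.map f) φ = ofList w L fun a => φ (f a) := by
  simp only [ofList, List.length_map, mask_map]

theorem addScalar_ofList (w : ℕ) (L : List α) (a : ZMod 2) (φ : α → ZMod 2) :
    (ofList w L φ).addScalar a = ofList w L fun x => φ x + a := by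
  have ne (b : ZMod 2) : b + 1 ≠ 0 ↔ b = 0 := by revert b; decide
  have eq (b : ZMod 2) : b + 1 = 0 ↔ b ≠ 0 := by revert b; decide
  rcases eq_zero_or_eq_one a with rfl | rfl
  · simp only [addScalar, if_true, add_zero]
  · simp only [addScalar, one_ne_zero, if_false, ofList, ne, eq]

end BitBlock

open BitBlock

/-- The blocks of the functional `u ↦ u ⬝ᵥ b` along `sparse n 0, …, sparse n k`. -/
def sparseBlocks (w k : ℕ) : (n : ℕ) → (Fin n → ZMod 2) → List BitBlock
  | 0, _ => List.replicate (k + 1) ⟨1, 0, 1⟩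
  | n + 1, b =>
    let t := sparseBlocks w k n (vecTail b)
    ⟨1, 0, 1⟩ :: if b 0 = 0 then List.zipWith (append w) t.tail t
      else List.zipWith (fun X Y => append w X (addScalar 1 Y)) t.tail t

theorem ofList_singleton_zero (w n : ℕ) (b : Fin n → ZMod 2) :
    ofList w [0] (· ⬝ᵥ b) = ⟨1, 0, 1⟩ := by
  simp [ofList, mask, pack]

theorem ofList_sparse_succ (w n k : ℕ) (b : Fin (n + 1) → ZMod 2) :
    ofList w (sparse (n + 1) (k + 1)) (· ⬝ᵥ b) =
      (ofList w (sparse n (k + 1)) (· ⬝ᵥ vecTail b)).append w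
        ((ofList w (sparse n k) (· ⬝ᵥ vecTail b)).addScalar (b 0)) := by
  simp only [sparse, ofList_append, ofList_map, addScalar_ofList, cons_dotProduct, zero_mul,
    zero_add, one_mul, add_comm (b 0), vecHead]

theorem sparseBlocks_eq (w k n : ℕ) (b : Fin n → ZMod 2) :
    sparseBlocks w k n b =
      List.ofFn fun j : Fin (k + 1) => ofList w (sparse n j) (· ⬝ᵥ b) := by
  induction n with
  | zero => simp only [sparseBlocks, sparse, ofList_singleton_zero, List.ofFn_const]
  | succ n ih =>
    have zipWith_eq : sparseBlocks w k (n + 1) b = ⟨1, 0, 1⟩ :: List.zipWith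
        (fun X Y => append w X (addScalar (b 0) Y)) (sparseBlocks w k n (vecTail b)).tail
          (sparseBlocks w k n (vecTail b)) := by
      rw [sparseBlocks]
      rcases eq_zero_or_eq_one (b 0) with h | h
      · simp only [h, if_true]; simp [addScalar]
      · simp only [h, one_ne_zero, if_false]
    rw [zipWith_eq, ih]
    refine List.ext_getElem (by simp) fun j _ _ => ?_
    cases j with
    | zero => simp [sparse, ofList_singleton_zero]
    | succ j => simp [ofList_sparse_succ, -List.ofFn_succ]

/-- The mask of the affine functional `u ↦ u ⬝ᵥ b + a` along `sparse n k`. -/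
def sparseBlock (w k : ℕ) {n : ℕ} (b : Fin n → ZMod 2) (a : ZMod 2) : BitBlock :=
  ((sparseBlocks w k n b).getD k ⟨0, 0, 0⟩).addScalar a

theorem sparseBlock_eq (w k : ℕ) {n : ℕ} (b : Fin n → ZMod 2) (a : ZMod 2) :
    sparseBlock w k b a = ofList w (sparse n k) fun u => u ⬝ᵥ b + a := by
  rw [sparseBlock, sparseBlocks_eq, ← addScalar_ofList, List.getD_eq_getElem _ _ (by simp)]
  simp only [List.getElem_ofFn]

end Blocks

section MinimumWeight

variable {n d : ℕ} {S : Set (Fin n → ZMod 2)} {x : Fin n → ZMod 2}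

theorem minWtSet_le (hx : x ∈ S) (hx₀ : x ≠ 0) : minWtSet S ≤ wt x :=
  Nat.sInf_le ⟨x, hx, hx₀, rfl⟩

theorem minWtSet_eq (hS : ∀ x ∈ S, x ≠ 0 → d ≤ wt x) (hx : x ∈ S) (hx₀ : x ≠ 0)
    (hxd : wt x ≤ d) : minWtSet S = d := by
  refine (minWtSet_le hx hx₀).trans hxd |>.antisymm (le_csInf ⟨_, x, hx, hx₀, rfl⟩ ?_)
  rintro _ ⟨y, hy, hy₀, rfl⟩
  exact hS y hy hy₀

end MinimumWeight

section HalfSparse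

variable {n k : ℕ} {f g : (Fin n → ZMod 2) → Fin n → ZMod 2} {K : Set (Fin (n + n) → ZMod 2)}
  {x : Fin (n + n) → ZMod 2}

theorem append_inj {α : Type*} {m n : ℕ} {u u' : Fin m → α} {v v' : Fin n → α} :
    Fin.append u v = Fin.append u' v' ↔ u = u' ∧ v = v' :=
  ((Fin.appendEquiv m n).injective.eq_iff (a := (u, v)) (b := (u', v'))).trans Prod.mk_inj

theorem wt_append {m n : ℕ} (u : Fin m → ZMod 2) (v : Fin n → ZMod 2) :
    wt (Fin.append u v) = wt u + wt v := by
  simp only [wt_eq_sum, Fin.sum_univ_add, Fin.append_left, Fin.append_right]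

/-- The words `(u, f u)` and `(g v, v)` with `u` and `v` of weight at most `k`. -/
def halfSparse (k : ℕ) (f g : (Fin n → ZMod 2) → Fin n → ZMod 2) :
    List (Fin (n + n) → ZMod 2) :=
  (sparse n k).map (fun u => Fin.append u (f u)) ++ (sparse n k).map fun v => Fin.append (g v) v

theorem mem_of_mem_halfSparse (hf : K = Set.range fun u => Fin.append u (f u))
    (hg : K = Set.range fun v => Fin.append (g v) v) (hx : x ∈ halfSparse k f g) : x ∈ K := by
  rw [halfSparse, List.mem_append, List.mem_map, List.mem_map] at hx
  obtain ⟨u, -, rfl⟩ | ⟨v, -, rfl⟩ := hx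
  · exact hf ▸ Set.mem_range_self u
  · exact hg ▸ Set.mem_range_self v

-- One of the two halves of a word of weight at most `2 * k + 1` has weight at most `k`.
theorem mem_halfSparse (hf : K = Set.range fun u => Fin.append u (f u))
    (hg : K = Set.range fun v => Fin.append (g v) v) (hx : x ∈ K)
    (hk : wt x ≤ 2 * k + 1) : x ∈ halfSparse k f g := by
  obtain ⟨u, hu⟩ : ∃ u, Fin.append u (f u) = x := by rwa [hf] at hx
  obtain ⟨v, hv⟩ : ∃ v, Fin.append (g v) v = x := by rwa [hg] at hx
  have huv : f u = v := (append_inj.1 (hu.trans hv.symm)).2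
  simp only [halfSparse, List.mem_append, List.mem_map, mem_sparse]
  rw [← hu, wt_append, huv] at hk
  rcases le_or_gt (wt u) k with h | h
  · exact Or.inl ⟨u, h, hu⟩
  · exact Or.inr ⟨v, by omega, hv⟩

theorem minWtSet_eq_of_halfSparse (hf : K = Set.range fun u => Fin.append u (f u))
    (hg : K = Set.range fun v => Fin.append (g v) v) {d : ℕ} (hd : d ≤ 2 * k + 2)
    (lower : ∀ x ∈ halfSparse k f g, wt x < 1 ↔ wt x < d)
    (upper : ¬ ∀ x ∈ halfSparse k f g, wt x < 1 ↔ wt x < d + 1) : minWtSet K = d := by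
  push Not at upper
  obtain ⟨x, hx, upper⟩ := upper
  have x_ne : x ≠ 0 := by
    rintro rfl
    simp only [wt_zero] at upper
    omega
  have := mt wt_eq_zero.1 x_ne
  refine minWtSet_eq (fun y hy hy₀ => ?_) (mem_of_mem_halfSparse hf hg hx) x_ne (by omega)
  by_contra! hlt
  have wt_lt := (lower y (mem_halfSparse hf hg hy (by omega))).2 hlt
  exact hy₀ (wt_eq_zero.1 (Nat.lt_one_iff.1 wt_lt))

theorem nodup_filter_halfSparse {p : (Fin (n + n) → ZMod 2) → Bool}
    (hp : ∀ x ∈ halfSparse k f g, p x → wt x = 2 * k + 1) :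
    ((halfSparse k f g).filter p).Nodup := by
  rw [halfSparse] at hp ⊢
  rw [List.filter_append]
  refine (((nodup_sparse n k).map fun _ _ h => (append_inj.1 h).1).filter p).append
    (((nodup_sparse n k).map fun _ _ h => (append_inj.1 h).2).filter p)
    (List.disjoint_left.2 fun x hu hv => ?_)
  rw [List.mem_filter, List.mem_map] at hu hv
  obtain ⟨⟨u, hu, hux⟩, px⟩ := hu
  obtain ⟨⟨v, hv, hvx⟩, -⟩ := hv
  have wt_eq := hp x (List.mem_append_left _ (List.mem_map.2 ⟨u, hu, hux⟩)) px
  rw [← hvx, (append_inj.1 (hvx.trans hux.symm)).1, wt_append] at wt_eq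
  rw [mem_sparse] at hu hv
  omega

theorem countP_halfSparse (hf : K = Set.range fun u => Fin.append u (f u))
    (hg : K = Set.range fun v => Fin.append (g v) v) {p : (Fin (n + n) → ZMod 2) → Bool}
    (hp : ∀ x ∈ K, p x → wt x = 2 * k + 1) :
    (halfSparse k f g).countP p = {x ∈ K | p x}.ncard := by
  have filter_eq : {x ∈ K | p x} = ((halfSparse k f g).filter p).toFinset := by
    ext x
    simp only [Set.mem_ofPred_eq, List.coe_toFinset, List.mem_filter]
    exact and_congr_left fun px =>
      ⟨fun hx => mem_halfSparse hf hg hx (hp x hx px).le, mem_of_mem_halfSparse hf hg⟩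
  rw [filter_eq, Set.ncard_coe_finset, List.toFinset_card_of_nodup, List.countP_eq_length_filter]
  exact nodup_filter_halfSparse fun x hx => hp x (mem_of_mem_halfSparse hf hg hx)

end HalfSparse

section SelfDual

variable {n : ℕ} {C : Submodule (ZMod 2) (Fin n → ZMod 2)} {s x y : Fin n → ZMod 2}

theorem IsSelfDual.mem_iff (hC : IsSelfDual C) : x ∈ C ↔ ∀ c ∈ C, x ⬝ᵥ c = 0 :=
  Set.ext_iff.1 hC x

theorem wt_add (x y : Fin n → ZMod 2) :
    wt (x + y) + 2 * #{i | x i ≠ 0 ∧ y i ≠ 0} = wt x + wt y := by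
  have pointwise (a b : ZMod 2) :
      (if a + b ≠ 0 then 1 else 0) + 2 * (if a ≠ 0 ∧ b ≠ 0 then 1 else 0) =
        (if a ≠ 0 then 1 else 0) + if b ≠ 0 then 1 else 0 := by
    revert a b; decide
  simp only [wt, hammingNorm, card_filter, mul_sum, ← sum_add_distrib, Pi.add_apply, pointwise]

theorem dotProduct_eq_card (x y : Fin n → ZMod 2) :
    x ⬝ᵥ y = (#{i | x i ≠ 0 ∧ y i ≠ 0} : ℕ) := by
  have pointwise (a b : ZMod 2) : a * b = if a ≠ 0 ∧ b ≠ 0 then 1 else 0 := by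
    revert a b; decide
  simp only [dotProduct, card_filter, Nat.cast_sum, Nat.cast_ite, Nat.cast_one, Nat.cast_zero,
    pointwise]

/-- Half of the weight of a word, rounded down and modulo 2. On a self-dual code it is a linear
functional, whose kernel is the doubly even subcode. -/
def halfWt (x : Fin n → ZMod 2) : ZMod 2 :=
  (wt x / 2 : ℕ)

theorem IsSelfDual.two_dvd_wt (hC : IsSelfDual C) (hx : x ∈ C) : 2 ∣ wt x := by
  have dot_self := hC.mem_iff.1 hx x hx
  rw [dotProduct_eq_card, ZMod.natCast_eq_zero_iff] at dot_self
  simpa only [and_self, wt, hammingNorm] using dot_self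

theorem IsSelfDual.halfWt_add (hC : IsSelfDual C) (hx : x ∈ C) (hy : y ∈ C) :
    halfWt (x + y) = halfWt x + halfWt y := by
  have dot_eq := hC.mem_iff.1 hx y hy
  rw [dotProduct_eq_card, ZMod.natCast_eq_zero_iff] at dot_eq
  have := wt_add x y
  have := hC.two_dvd_wt hx
  have := hC.two_dvd_wt hy
  rw [halfWt, halfWt, halfWt, ← Nat.cast_add, ZMod.natCast_eq_natCast_iff']
  omega

theorem IsSelfDual.four_dvd_wt_iff (hC : IsSelfDual C) (hx : x ∈ C) :
    4 ∣ wt x ↔ halfWt x = 0 := by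
  have := hC.two_dvd_wt hx
  rw [halfWt, ZMod.natCast_eq_zero_iff]
  omega

/-- A vector `s` is characteristic for `C` if it represents the functional `halfWt` on `C`. -/
def IsCharacteristic (C : Submodule (ZMod 2) (Fin n → ZMod 2)) (s : Fin n → ZMod 2) : Prop :=
  ∀ c ∈ C, s ⬝ᵥ c = halfWt c

theorem IsSelfDual.isCharacteristic_of_mulVec (hC : IsSelfDual C) {m : ℕ}
    {G : Matrix (Fin m) (Fin n) (ZMod 2)} (hG : LinearMap.range G.vecMulLinear = C)
    (hs : G.mulVec s = fun i => halfWt (G i)) : IsCharacteristic C s := by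
  have halfWt_zero : halfWt (0 : Fin n → ZMod 2) = 0 := by
    rw [halfWt, wt_zero, Nat.zero_div, Nat.cast_zero]
  rw [range_vecMulLinear] at hG
  intro c hc
  rw [← hG] at hc
  induction hc using Submodule.span_induction with
  | mem r hr =>
    obtain ⟨i, rfl⟩ := hr
    exact (dotProduct_comm _ _).trans (congrFun hs i)
  | zero => rw [dotProduct_zero, halfWt_zero]
  | add x y hx hy ihx ihy =>
    rw [hG] at hx hy
    rw [dotProduct_add, ihx, ihy, hC.halfWt_add hx hy]
  | smul a x _ ih =>
    rcases eq_zero_or_eq_one a with rfl | rfl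
    · rw [zero_smul, dotProduct_zero, halfWt_zero]
    · rw [one_smul, ih]

theorem IsSinglyEvenSelfDual.mem_shadow_iff (hC : IsSinglyEvenSelfDual C)
    (hs : IsCharacteristic C s) : x ∈ shadow C ↔ x + s ∈ C := by
  obtain ⟨hC, c₀, hc₀, four_ndvd⟩ := hC
  have mem_evenSub {c} : c ∈ evenSub C ↔ c ∈ C ∧ s ⬝ᵥ c = 0 :=
    and_congr_right fun hc => by rw [hs c hc, hC.four_dvd_wt_iff hc]
  have s_dot_c₀ : s ⬝ᵥ c₀ = 1 := by
    rw [hC.four_dvd_wt_iff hc₀, ← hs c₀ hc₀] at four_ndvd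
    exact (eq_zero_or_eq_one _).resolve_left four_ndvd
  -- A vector orthogonal to `C₀` and to `c₀` is orthogonal to `C = C₀ ∪ (c₀ + C₀)`.
  have mem_of_dot {y} (hy : y ∈ dualSet (evenSub C)) (hy₀ : y ⬝ᵥ c₀ = 0) : y ∈ C := by
    refine hC.mem_iff.2 fun c hc => ?_
    rcases eq_zero_or_eq_one (s ⬝ᵥ c) with h | h
    · exact hy c (mem_evenSub.2 ⟨hc, h⟩)
    · have : y ⬝ᵥ (c + c₀) = 0 :=
        hy _ (mem_evenSub.2 ⟨C.add_mem hc hc₀, by rw [dotProduct_add, h, s_dot_c₀]; rfl⟩)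
      rwa [dotProduct_add, hy₀, add_zero] at this
  have s_mem : s ∈ dualSet (evenSub C) := fun c hc => (mem_evenSub.1 hc).2
  constructor
  · rintro ⟨hx, hxC⟩
    have x_dot_c₀ : x ⬝ᵥ c₀ = 1 :=
      (eq_zero_or_eq_one _).resolve_left fun h => hxC (mem_of_dot hx h)
    refine mem_of_dot (fun c hc => ?_) (by rw [add_dotProduct, x_dot_c₀, s_dot_c₀]; rfl)
    change (x + s) ⬝ᵥ c = 0
    rw [add_dotProduct, show x ⬝ᵥ c = 0 from hx c hc, show s ⬝ᵥ c = 0 from s_mem c hc, add_zero]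
  · intro hxs
    have x_dot {c} (hc : c ∈ C) : x ⬝ᵥ c = s ⬝ᵥ c := by
      have := hC.mem_iff.1 hxs c hc
      rwa [add_dotProduct, CharTwo.add_eq_zero] at this
    refine ⟨fun c hc => ?_, fun hx => ?_⟩
    · exact (x_dot hc.1).trans (mem_evenSub.1 hc).2
    · exact one_ne_zero ((s_dot_c₀.symm.trans (x_dot hc₀).symm).trans (hC.mem_iff.1 hx c₀ hc₀))

end SelfDual

section Equivalence

variable {n : ℕ} {C D : Submodule (ZMod 2) (Fin n → ZMod 2)}

/-- The number of words of weight `d` in `S` that are nonzero at both `i` and `j`. -/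
noncomputable def pairCount (S : Set (Fin n → ZMod 2)) (d : ℕ) (i j : Fin n) : ℕ :=
  {x ∈ S | wt x = d ∧ x i ≠ 0 ∧ x j ≠ 0}.ncard

theorem wt_comp_perm (σ : Equiv.Perm (Fin n)) (x : Fin n → ZMod 2) : wt (x ∘ σ) = wt x := by
  simp only [wt_eq_sum, Function.comp_apply]
  exact Equiv.sum_comp σ fun i => (decide (x i ≠ 0)).toNat

theorem CodeEquiv.exists_perm_shadow (h : CodeEquiv C D) :
    ∃ σ : Equiv.Perm (Fin n), ∀ x, x ∘ σ ∈ shadow D ↔ x ∈ shadow C := by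
  obtain ⟨σ, rfl⟩ := h
  set D := Submodule.map (LinearMap.funLeft (ZMod 2) (ZMod 2) σ) C
  have mem_D {x : Fin n → ZMod 2} : x ∘ σ ∈ D ↔ x ∈ C :=
    σ.surjective.injective_comp_right.mem_set_image
  have mem_evenSub {x : Fin n → ZMod 2} : x ∘ σ ∈ evenSub D ↔ x ∈ evenSub C :=
    and_congr mem_D (by rw [wt_comp_perm])
  refine ⟨σ, fun x => and_congr ?_ (not_congr mem_D)⟩
  calc x ∘ σ ∈ dualSet (evenSub D)
    _ ↔ ∀ y : Fin n → ZMod 2, y ∘ σ ∈ evenSub D → (x ∘ σ) ⬝ᵥ (y ∘ σ) = 0 :=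
      σ.injective.surjective_comp_right.forall
    _ ↔ x ∈ dualSet (evenSub C) := by simp only [mem_evenSub, comp_equiv_dotProduct_comp_equiv]; rfl

theorem CodeEquiv.exists_perm_pairCount (h : CodeEquiv C D) (d : ℕ) :
    ∃ σ : Equiv.Perm (Fin n), ∀ i j,
      pairCount (shadow D) d i j = pairCount (shadow C) d (σ i) (σ j) := by
  obtain ⟨σ, hσ⟩ := h.exists_perm_shadow
  refine ⟨σ, fun i j => ?_⟩
  rw [pairCount, ← Set.ncard_preimage_of_injective_subset_range
    σ.surjective.injective_comp_right fun x _ => σ.injective.surjective_comp_right x]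
  simp only [pairCount, Set.preimage_ofPred_eq, hσ, wt_comp_perm, Function.comp_apply]

/-- The sum of the squares of the pair counts of the shadow of `C` in weight `d`, each reduced
modulo `N`. -/
noncomputable def pairInvariant (C : Submodule (ZMod 2) (Fin n → ZMod 2)) (d N : ℕ) : ℕ :=
  ∑ i, ∑ j, (pairCount (shadow C) d i j % N) ^ 2

theorem CodeEquiv.pairInvariant_eq (h : CodeEquiv C D) (d N : ℕ) :
    pairInvariant C d N = pairInvariant D d N := by
  obtain ⟨σ, hσ⟩ := h.exists_perm_pairCount d
  simp only [pairInvariant, hσ]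
  refine ((Equiv.sum_comp σ fun i => ∑ j, _).symm.trans ?_)
  exact sum_congr rfl fun i _ => (Equiv.sum_comp σ _).symm

end Equivalence

section DoubleGenerator

open Matrix

variable {n : ℕ} {A : Matrix (Fin n) (Fin n) (ZMod 2)} {x : Fin (n + n) → ZMod 2}

/-- The generator matrix `[I | A]`. -/
def leftGen (A : Matrix (Fin n) (Fin n) (ZMod 2)) : Matrix (Fin n) (Fin (n + n)) (ZMod 2) :=
  of fun i => Fin.append ((1 : Matrix (Fin n) (Fin n) (ZMod 2)) i) (A i)

/-- The generator matrix `[Aᵀ | I]`, which generates the same code as `[I | A]` if `A * Aᵀ = 1`. -/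
def rightGen (A : Matrix (Fin n) (Fin n) (ZMod 2)) : Matrix (Fin n) (Fin (n + n)) (ZMod 2) :=
  of fun i => Fin.append (Aᵀ i) ((1 : Matrix (Fin n) (Fin n) (ZMod 2)) i)

theorem append_vecMul {R : Type*} [NonUnitalNonAssocSemiring R] {k l m : ℕ}
    (M : Matrix (Fin k) (Fin l) R) (N : Matrix (Fin k) (Fin m) R) (u : Fin k → R) :
    u ᵥ* of (fun i => Fin.append (M i) (N i)) = Fin.append (u ᵥ* M) (u ᵥ* N) := by
  ext c
  refine Fin.addCases (fun c => ?_) (fun c => ?_) c <;> simp [vecMul]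

theorem vecMul_leftGen (u : Fin n → ZMod 2) : u ᵥ* leftGen A = Fin.append u (u ᵥ* A) := by
  rw [leftGen, append_vecMul, vecMul_one]

theorem vecMul_rightGen (v : Fin n → ZMod 2) : v ᵥ* rightGen A = Fin.append (v ᵥ* Aᵀ) v := by
  rw [rightGen, append_vecMul, vecMul_one]

/-- The code generated by `[I | A]`. -/
def code (A : Matrix (Fin n) (Fin n) (ZMod 2)) : Submodule (ZMod 2) (Fin (n + n) → ZMod 2) :=
  LinearMap.range (leftGen A).vecMulLinear

theorem range_vecMulLinear_rightGen (hA : A * Aᵀ = 1) :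
    LinearMap.range (rightGen A).vecMulLinear = code A := by
  have right_mem (v : Fin n → ZMod 2) : v ᵥ* rightGen A = (v ᵥ* Aᵀ) ᵥ* leftGen A := by
    rw [vecMul_rightGen, vecMul_leftGen, vecMul_vecMul, mul_eq_one_comm.1 hA, vecMul_one]
  have left_mem (u : Fin n → ZMod 2) : u ᵥ* leftGen A = (u ᵥ* A) ᵥ* rightGen A := by
    rw [vecMul_rightGen, vecMul_leftGen, vecMul_vecMul, hA, vecMul_one]
  refine le_antisymm ?_ ?_
  · rintro _ ⟨v, rfl⟩
    exact ⟨v ᵥ* Aᵀ, (right_mem v).symm⟩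
  · rintro _ ⟨u, rfl⟩
    exact ⟨u ᵥ* A, (left_mem u).symm⟩

theorem append_dotProduct_append {R : Type*} [NonUnitalNonAssocSemiring R] {l m : ℕ}
    (a c : Fin l → R) (b d : Fin m → R) :
    Fin.append a b ⬝ᵥ Fin.append c d = a ⬝ᵥ c + b ⬝ᵥ d := by
  simp only [dotProduct, Fin.sum_univ_add, Fin.append_left, Fin.append_right]

theorem leftGen_mulVec_append (a b : Fin n → ZMod 2) :
    leftGen A *ᵥ Fin.append a b = a + A *ᵥ b := by
  calc leftGen A *ᵥ Fin.append a b
    _ = (1 : Matrix (Fin n) (Fin n) (ZMod 2)) *ᵥ a + A *ᵥ b :=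
      funext fun i => append_dotProduct_append _ _ _ _
    _ = a + A *ᵥ b := by rw [one_mulVec]

theorem rightGen_mulVec_append (a b : Fin n → ZMod 2) :
    rightGen A *ᵥ Fin.append a b = Aᵀ *ᵥ a + b := by
  calc rightGen A *ᵥ Fin.append a b
    _ = Aᵀ *ᵥ a + (1 : Matrix (Fin n) (Fin n) (ZMod 2)) *ᵥ b :=
      funext fun i => append_dotProduct_append _ _ _ _
    _ = Aᵀ *ᵥ a + b := by rw [one_mulVec]

theorem isSelfDual_code (hA : A * Aᵀ = 1) : IsSelfDual (code A) := by
  have mem_dual_iff (x : Fin (n + n) → ZMod 2) :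
      x ∈ dualSet (code A : Set (Fin (n + n) → ZMod 2)) ↔ leftGen A *ᵥ x = 0 := by
    have dot_eq (u : Fin n → ZMod 2) : x ⬝ᵥ (u ᵥ* leftGen A) = leftGen A *ᵥ x ⬝ᵥ u := by
      rw [dotProduct_comm, ← dotProduct_mulVec, dotProduct_comm]
    rw [← dotProduct_eq_zero_iff]
    exact Set.forall_mem_range.trans (forall_congr' fun u => by rw [← dot_eq]; rfl)
  ext x
  obtain ⟨⟨a, b⟩, rfl⟩ := (Fin.appendEquiv n n).surjective x
  change Fin.append a b ∈ code A ↔ Fin.append a b ∈ dualSet _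
  rw [mem_dual_iff, leftGen_mulVec_append, add_eq_zero_iff_neg_eq',
    ZModModule.neg_eq_self, ← range_vecMulLinear_rightGen hA]
  simp only [LinearMap.mem_range, vecMulLinear_apply, vecMul_rightGen, append_inj,
    vecMul_transpose, exists_eq_right]

theorem finrank_code (A : Matrix (Fin n) (Fin n) (ZMod 2)) :
    Module.finrank (ZMod 2) (code A) = n := by
  have injective : Function.Injective (leftGen A).vecMulLinear := fun u v h => by
    rw [vecMulLinear_apply, vecMulLinear_apply, vecMul_leftGen, vecMul_leftGen] at h
    exact (append_inj.1 h).1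
  rw [code, LinearMap.finrank_range_of_inj injective, Module.finrank_fin_fun]

end DoubleGenerator

section Cosets

open Matrix

variable {n : ℕ} {A : Matrix (Fin n) (Fin n) (ZMod 2)}

theorem append_add {R : Type*} [Add R] {m n : ℕ} (a b : Fin m → R) (c d : Fin n → R) :
    Fin.append (a + b) (c + d) = Fin.append a c + Fin.append b d := by
  ext i
  refine Fin.addCases (fun i => ?_) (fun i => ?_) i <;> simp

theorem append_vecMul_add (u t : Fin n → ZMod 2) :
    Fin.append u (u ᵥ* A + t) = u ᵥ* leftGen A + Fin.append 0 t := by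
  rw [vecMul_leftGen, ← append_add, add_zero]

theorem vecMul_add_append (v s : Fin n → ZMod 2) :
    Fin.append (v ᵥ* Aᵀ + s) v = v ᵥ* rightGen A + Fin.append s 0 := by
  rw [vecMul_rightGen, ← append_add, add_zero]

theorem setOf_add_mem_range {V W : Type*} [AddCommGroup V] [Module (ZMod 2) V] [AddCommGroup W]
    [Module (ZMod 2) W] (φ : V →ₗ[ZMod 2] W) (a : W) :
    {x | x + a ∈ LinearMap.range φ} = Set.range fun u => φ u + a := by
  ext x
  refine exists_congr fun u => ?_
  rw [← ZModModule.sub_eq_add x, eq_sub_iff_add_eq]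

theorem coset_eq_range_left (A : Matrix (Fin n) (Fin n) (ZMod 2)) (t : Fin n → ZMod 2) :
    {x | x + Fin.append 0 t ∈ code A} = Set.range fun u => Fin.append u (u ᵥ* A + t) := by
  simp only [append_vecMul_add]
  exact setOf_add_mem_range _ _

theorem coset_eq_range_right (hA : A * Aᵀ = 1) (s : Fin n → ZMod 2) :
    {x | x + Fin.append s 0 ∈ code A} = Set.range fun v => Fin.append (v ᵥ* Aᵀ + s) v := by
  simp only [vecMul_add_append, ← range_vecMulLinear_rightGen hA]
  exact setOf_add_mem_range _ _

end Cosets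

section Tables

open Matrix BitBlock

variable {n : ℕ}

/-- The words `(u, u * A + t)` and `(v * Aᵀ + s, v)` with `u` and `v` of weight at most `k`. -/
def lightTable (k : ℕ) (A : Matrix (Fin n) (Fin n) (ZMod 2)) (s t : Fin n → ZMod 2) :
    List (Fin (n + n) → ZMod 2) :=
  halfSparse k (fun u => u ᵥ* A + t) (fun v => v ᵥ* Aᵀ + s)

/-- The all-ones column of `lightTable k A s t`, computed without listing the words. -/
def tableOnes (w k n : ℕ) : ℕ :=
  let half := sparseBlock w k (0 : Fin n → ZMod 2) 1
  (half.append w half).bits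

/-- The columns of `lightTable k A s t`, computed without listing the words. -/
def tableColumns (w k : ℕ) (A : Matrix (Fin n) (Fin n) (ZMod 2)) (s t : Fin n → ZMod 2) :
    List ℕ :=
  List.ofFn fun c => ((sparseBlock w k (fun i => leftGen A i c) (Fin.append 0 t c)).append w
    (sparseBlock w k (fun i => rightGen A i c) (Fin.append s 0 c))).bits

theorem ofList_halfSparse (w k : ℕ) (f g : (Fin n → ZMod 2) → Fin n → ZMod 2)
    (φ : (Fin (n + n) → ZMod 2) → ZMod 2) :
    ofList w (halfSparse k f g) φ =
      (ofList w (sparse n k) fun u => φ (Fin.append u (f u))).append w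
        (ofList w (sparse n k) fun v => φ (Fin.append (g v) v)) := by
  rw [halfSparse, ofList_append, ofList_map, ofList_map]

theorem tableOnes_eq (w k : ℕ) (A : Matrix (Fin n) (Fin n) (ZMod 2)) (s t : Fin n → ZMod 2) :
    tableOnes w k n = mask w (lightTable k A s t) fun _ => true := by
  have one_block : ofList w (lightTable k A s t) (fun _ => 1) =
      (sparseBlock w k (0 : Fin n → ZMod 2) 1).append w
        (sparseBlock w k (0 : Fin n → ZMod 2) 1) := by
    simp only [lightTable, ofList_halfSparse, sparseBlock_eq, dotProduct_zero, zero_add]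
  rw [tableOnes, ← one_block]
  rfl

theorem tableColumns_eq (w k : ℕ) (A : Matrix (Fin n) (Fin n) (ZMod 2)) (s t : Fin n → ZMod 2) :
    tableColumns w k A s t = columns w (lightTable k A s t) := by
  refine congrArg List.ofFn (funext fun c => ?_)
  have column_block : ofList w (lightTable k A s t) (· c) =
      (sparseBlock w k (fun i => leftGen A i c) (Fin.append 0 t c)).append w
        (sparseBlock w k (fun i => rightGen A i c) (Fin.append s 0 c)) := by
    simp only [lightTable, ofList_halfSparse, append_vecMul_add, vecMul_add_append,
      sparseBlock_eq]
    rfl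
  rw [← column_block]
  rfl

end Tables

section Certificates

open Matrix

variable {n : ℕ} {A : Matrix (Fin n) (Fin n) (ZMod 2)}

/-- The right half of a characteristic vector for `code A`. -/
def rightOffset (A : Matrix (Fin n) (Fin n) (ZMod 2)) (i : Fin n) : ZMod 2 :=
  halfWt (rightGen A i)

/-- The left half of a characteristic vector for `code A`. -/
def leftOffset (A : Matrix (Fin n) (Fin n) (ZMod 2)) (i : Fin n) : ZMod 2 :=
  halfWt (leftGen A i)

theorem isCharacteristic_leftOffset (hA : A * Aᵀ = 1) :
    IsCharacteristic (code A) (Fin.append (leftOffset A) 0) := by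
  refine (isSelfDual_code hA).isCharacteristic_of_mulVec rfl ?_
  rw [leftGen_mulVec_append, mulVec_zero, add_zero]
  rfl

theorem isCharacteristic_rightOffset (hA : A * Aᵀ = 1) :
    IsCharacteristic (code A) (Fin.append 0 (rightOffset A)) := by
  refine (isSelfDual_code hA).isCharacteristic_of_mulVec (range_vecMulLinear_rightGen hA) ?_
  rw [rightGen_mulVec_append, mulVec_zero, zero_add]
  rfl

/-- The test that the least weight of the nonzero words of a table is `d`, in terms of the columns
and the all-ones column of the table. -/
def hasMinWt (w d ones : ℕ) (cols : List ℕ) : Bool :=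
  lightMask w 1 ones cols == lightMask w d ones cols &&
    lightMask w 1 ones cols != lightMask w (d + 1) ones cols

/-- The test that `A` is orthogonal, that `code A` is singly even of minimum weight `2 * k + 2`,
that its shadow has minimum weight `2 * k + 1`, and that its pair invariant in this weight is `J`.
Numbers are kept in digits of `w + 1` bits. -/
def certifies (w k : ℕ) (A : Matrix (Fin n) (Fin n) (ZMod 2)) (J : ℕ) : Bool :=
  let ones := tableOnes (w + 1) k n
  let shadowColumns := tableColumns (w + 1) k A (leftOffset A) (rightOffset A)
  decide (A * Aᵀ = 1) && decide (leftOffset A ≠ 0) &&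
    hasMinWt w (2 * k + 2) ones (tableColumns (w + 1) k A 0 0) &&
    hasMinWt w (2 * k + 1) ones shadowColumns &&
    pairSum (w + 1) (lightMask w (2 * k + 2) ones shadowColumns) shadowColumns == J

variable {w k : ℕ} {K : Set (Fin (n + n) → ZMod 2)} {s t : Fin n → ZMod 2}

theorem minWtSet_eq_of_hasMinWt (hA : A * Aᵀ = 1) (hn : n + n < 2 ^ w)
    (hs : K = {x | x + Fin.append s 0 ∈ code A}) (ht : K = {x | x + Fin.append 0 t ∈ code A})
    {d : ℕ} (hd : d ≤ 2 * k + 2) (hdw : d < 2 ^ w)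
    (h : hasMinWt w d (tableOnes (w + 1) k n) (tableColumns (w + 1) k A s t)) :
    minWtSet K = d := by
  simp only [hasMinWt, tableOnes_eq _ _ A s t, tableColumns_eq, Bool.and_eq_true, beq_iff_eq,
    bne_iff_ne, ne_eq, lightMask_eq_iff _ hn Nat.one_le_two_pow hdw.le,
    lightMask_eq_iff _ hn Nat.one_le_two_pow hdw] at h
  exact minWtSet_eq_of_halfSparse (ht.trans (coset_eq_range_left A t))
    (hs.trans (coset_eq_range_right hA s)) hd h.1 h.2

theorem pairSum_lightMask (hA : A * Aᵀ = 1) (hn : n + n < 2 ^ w) (hkw : 2 * k + 2 ≤ 2 ^ w)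
    (hs : K = {x | x + Fin.append s 0 ∈ code A}) (ht : K = {x | x + Fin.append 0 t ∈ code A})
    (hK : minWtSet K = 2 * k + 1) :
    pairSum (w + 1) (lightMask w (2 * k + 2) (tableOnes (w + 1) k n)
        (tableColumns (w + 1) k A s t)) (tableColumns (w + 1) k A s t) =
      ∑ i, ∑ j, (pairCount K (2 * k + 1) i j % (2 ^ (w + 1) - 1)) ^ 2 := by
  have wt_iff {x : Fin (n + n) → ZMod 2} (hx : x ∈ K) {i : Fin (n + n)} (hxi : x i ≠ 0) :
      wt x < 2 * k + 2 ↔ wt x = 2 * k + 1 := by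
    have := minWtSet_le hx fun h => hxi (congrFun h i)
    omega
  have count_eq (i j : Fin (n + n)) : (lightTable k A s t).countP (fun x =>
      decide (wt x < 2 * k + 2) && decide (x i ≠ 0) && decide (x j ≠ 0)) =
        pairCount K (2 * k + 1) i j := by
    rw [lightTable, countP_halfSparse (ht.trans (coset_eq_range_left A t))
      (hs.trans (coset_eq_range_right hA s)), pairCount]
    · congr 1
      ext x
      simp only [Bool.and_eq_true, decide_eq_true_eq, and_assoc]
      exact and_congr_right fun hx => and_congr_left fun hxi => wt_iff hx hxi.1
    · intro x hx hp
      simp only [Bool.and_eq_true, decide_eq_true_eq] at hp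
      exact (wt_iff hx hp.1.2).1 hp.1.1
  simp only [tableOnes_eq _ _ A s t, tableColumns_eq, lightMask_columns _ hn hkw,
    pairSum_columns w.succ_ne_zero, count_eq]

theorem isSinglyEvenSelfDual_code (hA : A * Aᵀ = 1) (hA₀ : leftOffset A ≠ 0) :
    IsSinglyEvenSelfDual (code A) := by
  have hC := isSelfDual_code hA
  obtain ⟨i, hi⟩ := Function.ne_iff.1 hA₀
  have row_mem : leftGen A i ∈ code A := ⟨Pi.single i 1, single_one_vecMul i _⟩
  exact ⟨hC, leftGen A i, row_mem, mt (hC.four_dvd_wt_iff row_mem).1 hi⟩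

theorem shadow_code_eq (hC : IsSinglyEvenSelfDual (code A)) {c : Fin (n + n) → ZMod 2}
    (hc : IsCharacteristic (code A) c) : shadow (code A) = {x | x + c ∈ code A} :=
  Set.ext fun _ => hC.mem_shadow_iff hc

theorem certifies_sound {J : ℕ} (hn : n + n < 2 ^ w) (hkw : 2 * k + 2 < 2 ^ w)
    (h : certifies w k A J) :
    IsSinglyEvenSelfDual (code A) ∧ minWt (code A) = 2 * k + 2 ∧
      minWtSet (shadow (code A)) = 2 * k + 1 ∧
      pairInvariant (code A) (2 * k + 1) (2 ^ (w + 1) - 1) = J := by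
  simp only [certifies, Bool.and_eq_true, decide_eq_true_eq, beq_iff_eq] at h
  obtain ⟨⟨⟨⟨hA, hA₀⟩, hcode⟩, hshadow⟩, hJ⟩ := h
  have hC := isSinglyEvenSelfDual_code hA hA₀
  have left := shadow_code_eq hC (isCharacteristic_leftOffset hA)
  have right := shadow_code_eq hC (isCharacteristic_rightOffset hA)
  have code_eq : (code A : Set (Fin (n + n) → ZMod 2)) = {x | x + Fin.append 0 0 ∈ code A} := by
    have append_zero : Fin.append (0 : Fin n → ZMod 2) (0 : Fin n → ZMod 2) = 0 := by
      ext i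
      exact Fin.addCases (Fin.append_left 0 0) (Fin.append_right 0 0) i
    simp only [append_zero, add_zero]
    rfl
  have shadow_wt := minWtSet_eq_of_hasMinWt hA hn left right (by omega) (by omega) hshadow
  exact ⟨hC, minWtSet_eq_of_hasMinWt hA hn code_eq code_eq le_rfl hkw hcode, shadow_wt,
    (pairSum_lightMask hA hn hkw.le left right shadow_wt).symm.trans hJ⟩

end Certificates

section FourCirculant

open Matrix

/-- The circulant matrix with first row `p`. -/
def circ {m : ℕ} [NeZero m] (p : Fin m → ZMod 2) : Matrix (Fin m) (Fin m) (ZMod 2) :=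
  of fun i j => p (j - i)

/-- The bordered four-circulant matrix with rows `[P Q 1]`, `[R S 0]` and `[0 1 0]`, where `P`, `Q`,
`R` and `S` are the circulant matrices with first rows `p`, `q`, `r` and `s`. -/
def borderedFourCirculant {m : ℕ} [NeZero m] (p q r s : Fin m → ZMod 2) :
    Matrix (Fin (m + m + 1)) (Fin (m + m + 1)) (ZMod 2) :=
  of (Fin.append
    (Fin.append (fun i => Fin.append (Fin.append (circ p i) (circ q i)) 1)
      (fun i => Fin.append (Fin.append (circ r i) (circ s i)) 0))
    fun _ => Fin.append (Fin.append 0 1) 0)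

/-- The vector whose entry at `i` is the binary digit of `b` at `2 ^ i`. -/
def bitVec (m b : ℕ) (i : Fin m) : ZMod 2 :=
  if b.testBit i then 1 else 0

/-- The first rows of the circulants `P`, `Q`, `R`, `S` of ten bordered four-circulant matrices of
order 31, found by computer search, in binary. -/
def seeds : Fin 10 → Fin 4 → ℕ :=
  ![![293, 2191, 3822, 9345], ![303, 195, 15614, 29825], ![879, 427, 10878, 30401],
    ![943, 65, 32254, 30145], ![1535, 2781, 17582, 32673], ![1659, 2709, 22190, 24161],
    ![459, 1885, 20856, 25155], ![377, 1899, 6758, 25185], ![619, 1003, 11913, 8703],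
    ![987, 427, 18263, 21817]]

/-- The bordered four-circulant matrix of order 31 given by `seeds i`. -/
def seedMatrix (i : Fin 10) : Matrix (Fin 31) (Fin 31) (ZMod 2) :=
  borderedFourCirculant (bitVec 15 (seeds i 0)) (bitVec 15 (seeds i 1)) (bitVec 15 (seeds i 2))
    (bitVec 15 (seeds i 3))

/-- The pair invariants, modulo 127, of the codes of the ten matrices. -/
def seedInvariant : Fin 10 → ℕ :=
  ![4374062, 4361582, 4352462, 4389422, 4345262, 4361102, 4375022, 4341662, 4357502, 4340462]

set_option maxRecDepth 100000 in
set_option maxHeartbeats 4000000 in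
-- The kernel examines 800,000 words for each of the ten matrices.
theorem certifies_seedMatrix (i : Fin 10) : certifies 6 5 (seedMatrix i) (seedInvariant i) := by
  fin_cases i <;> decide +kernel

theorem seedInvariant_injective : Function.Injective seedInvariant := by
  decide

end FourCirculant

/-- There exist at least 10 pairwise inequivalent s-extremal singly even self-dual
`[62, 31, 12]` codes: singly even self-dual codes of length 62 with minimum weight 12
whose shadows have minimum weight 11. -/
theorem exists_10_sExtremal_62 :
    ∃ f : Fin 10 → Submodule (ZMod 2) (Fin 62 → ZMod 2),
      (∀ i, IsSinglyEvenSelfDual (f i) ∧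
        Module.finrank (ZMod 2) (f i) = 31 ∧
        minWt (f i) = 12 ∧
        minWtSet (shadow (f i)) = 11) ∧
      ∀ i j, i ≠ j → ¬ CodeEquiv (f i) (f j) := by
  have sound (i : Fin 10) := certifies_sound (by decide) (by decide) (certifies_seedMatrix i)
  refine ⟨fun i => code (seedMatrix i), fun i => ?_, fun i j hij hequiv => ?_⟩
  · obtain ⟨hC, code_wt, shadow_wt, -⟩ := sound i
    exact ⟨hC, finrank_code (seedMatrix i), code_wt, shadow_wt⟩
  · have invariant_eq (i : Fin 10) := (sound i).2.2.2
    refine hij (seedInvariant_injective ?_)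
    rw [← invariant_eq i, ← invariant_eq j]
    exact hequiv.pairInvariant_eq _ _
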